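/- arXiv:1411.1943 — 9 statements merged into one kernel-verified Lean document; each statement's English description precedes it below -/
import Mathlib

section
/- Let m ≥ 3 be a natural number, let h be a positive definite real m×m matrix, let v, w ∈ ℝ^m and c ∈ ℝ. If v_i * v_j + w_i * w_j = c * h_{i j} for all indices i, j, then v = 0, w = 0 and c = 0. -/
open Matrix in
/-- A sum of two rank-one matrices `v_i v_j + w_i w_j` can equal a multiple
`c • h` of a positive definite matrix `h` in dimension `m ≥ 3` only trivially:
`v = 0`, `w = 0` and `c = 0`. -/
theorem rank_two_eq_smul_posDef (m : ℕ) (hm : 3 ≤ m)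
    (h : Matrix (Fin m) (Fin m) ℝ) (hpd : h.PosDef)
    (v w : Fin m → ℝ) (c : ℝ)
    (hvw : ∀ i j : Fin m, v i * v j + w i * w j = c * h i j) :
    v = 0 ∧ w = 0 ∧ c = 0 := by
  have hc : c = 0 := by
    have hker : LinearMap.ker (Matrix.mulVecLin (Matrix.of ![v, w])) ≠ ⊥ :=
      LinearMap.ker_ne_bot_of_finrank_lt (by simp; omega)
    obtain ⟨x, hx, hx0⟩ := Submodule.exists_mem_ne_zero_of_ne_bot hker
    rw [LinearMap.mem_ker, Matrix.mulVecLin_apply] at hx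
    have h1 : v ⬝ᵥ x = 0 := congrFun hx 0
    have h2 : w ⬝ᵥ x = 0 := congrFun hx 1
    have hpos := hpd.dotProduct_mulVec_pos hx0
    have hz : c • (h.mulVec x) = 0 := by
      funext i
      have e : c * (h.mulVec x) i = v i * (v ⬝ᵥ x) + w i * (w ⬝ᵥ x) := by
        simp only [Matrix.mulVec, dotProduct, Finset.mul_sum, ← Finset.sum_add_distrib]
        refine Finset.sum_congr rfl fun j _ => ?_
        linear_combination (-x j) * hvw i j
      simp [e, h1, h2]
    have h3 : c * (star x ⬝ᵥ h.mulVec x) = 0 := by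
      rw [← smul_eq_mul, ← dotProduct_smul, hz, dotProduct_zero]
    exact (mul_eq_zero.mp h3).resolve_right hpos.ne'
  subst hc
  refine ⟨?_, ?_, rfl⟩
  · funext i
    have := hvw i i
    simp only [Pi.zero_apply]
    nlinarith [mul_self_nonneg (v i), mul_self_nonneg (w i)]
  · funext i
    have := hvw i i
    simp only [Pi.zero_apply]
    nlinarith [mul_self_nonneg (v i), mul_self_nonneg (w i)]
end

section
/- Let m be a natural number, let B be a nonzero real antisymmetric m×m matrix (Bᵀ = −B) and c ∈ ℝ with B * Bᵀ = c • 1 (c times the identity matrix). Then c > 0, m is even, and the matrix J := (Real.sqrt c)⁻¹ • B satisfies J * Jᵀ = 1 and J * J = −1 (i.e. J is orthogonal and is a complex structure). -/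
open Matrix

/-- A nonzero antisymmetric real matrix `B` with `B * Bᵀ = c • 1` forces `c > 0`,
an even dimension `m`, and `J := (√c)⁻¹ • B` is an orthogonal complex structure:
`J * Jᵀ = 1` and `J * J = -1`. -/
theorem antisymm_mul_transpose_smul_one_complex_structure (m : ℕ)
    (B : Matrix (Fin m) (Fin m) ℝ) (c : ℝ)
    (hB0 : B ≠ 0) (hB : Bᵀ = -B)
    (h : B * Bᵀ = c • (1 : Matrix (Fin m) (Fin m) ℝ)) :
    0 < c ∧ Even m ∧
      ((Real.sqrt c)⁻¹ • B) * ((Real.sqrt c)⁻¹ • B)ᵀ = 1 ∧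
      ((Real.sqrt c)⁻¹ • B) * ((Real.sqrt c)⁻¹ • B) = -1 := by
  have hc : 0 < c := by
    obtain ⟨i, j, hij⟩ : ∃ i j, B i j ≠ 0 := by
      by_contra! hcon
      exact hB0 (by ext i j; simpa using hcon i j)
    have h1 : ∑ k, B i k * B i k = c := by
      have h2 := congrFun (congrFun h i) i
      simpa [Matrix.mul_apply] using h2
    rw [← h1]
    exact Finset.sum_pos' (fun k _ => mul_self_nonneg _)
      ⟨j, Finset.mem_univ _, mul_self_pos.mpr hij⟩
  have hJ : ((Real.sqrt c)⁻¹ • B) * ((Real.sqrt c)⁻¹ • B)ᵀ = 1 := by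
    rw [Matrix.transpose_smul, Matrix.smul_mul, Matrix.mul_smul, h, smul_smul, smul_smul,
      ← mul_inv, Real.mul_self_sqrt hc.le, inv_mul_cancel₀ hc.ne', one_smul]
  have hJJ : ((Real.sqrt c)⁻¹ • B) * ((Real.sqrt c)⁻¹ • B) = -1 := by
    rw [Matrix.transpose_smul, hB, smul_neg, Matrix.mul_neg] at hJ
    rw [← hJ, neg_neg]
  refine ⟨hc, ?_, hJ, hJJ⟩
  have hd := congrArg Matrix.det hJJ
  rw [Matrix.det_mul, Matrix.det_neg, Matrix.det_one, Fintype.card_fin, mul_one] at hd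
  by_contra hm
  rw [(Nat.not_even_iff_odd.mp hm).neg_one_pow] at hd
  have := mul_self_nonneg ((Real.sqrt c)⁻¹ • B).det
  linarith
end

section
/- Let m ≥ 2 be a natural number and let b be a real-valued alternating multilinear map in m−1 arguments on EuclideanSpace ℝ (Fin m). Let e_i denote the standard orthonormal basis vectors. Suppose there exists c ∈ ℝ such that for all i, j ∈ Fin m, the contraction ∑_{k : Fin (m−2) → Fin m} b(e_i, e_{k(0)}, …, e_{k(m−3)}) * b(e_j, e_{k(0)}, …, e_{k(m−3)}) equals c * δ_{ij} (Kronecker delta). Then b = 0 and c = 0. -/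
/-- The tuple of arguments `(e i, e (k 0), …, e (k (m-3)))` fed to an
alternating map in `m - 1` arguments: the first slot is `e i`, the remaining
`m - 2` slots are `e (k t)`. -/
noncomputable def insArgs (m : ℕ) (e : Fin m → EuclideanSpace ℝ (Fin m))
    (i : Fin m) (k : Fin (m - 2) → Fin m) :
    Fin (m - 1) → EuclideanSpace ℝ (Fin m) :=
  fun t => if ht : (t : ℕ) = 0 then e i
    else e (k ⟨(t : ℕ) - 1, by have := t.isLt; omega⟩)

/-- The wedge product of a linear functional with an alternating form. -/
noncomputable def wedgeOne {E : Type*} [AddCommGroup E] [Module ℝ E] {n : ℕ}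
    (φ : E →ₗ[ℝ] ℝ) (b : E [⋀^Fin n]→ₗ[ℝ] ℝ) : E [⋀^Fin (n + 1)]→ₗ[ℝ] ℝ :=
  AlternatingMap.alternatizeUncurryFin (φ.smulRight b)

lemma wedgeOne_apply {E : Type*} [AddCommGroup E] [Module ℝ E] {n : ℕ}
    (φ : E →ₗ[ℝ] ℝ) (b : E [⋀^Fin n]→ₗ[ℝ] ℝ) (v : Fin (n + 1) → E) :
    wedgeOne φ b v = ∑ i : Fin (n + 1), (-1) ^ (i : ℕ) * (φ (v i) * b (i.removeNth v)) := by
  rw [wedgeOne, AlternatingMap.alternatizeUncurryFin_apply]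
  refine Finset.sum_congr rfl fun i _ => ?_
  rcases neg_one_pow_eq_or ℝ (i : ℕ) with h | h <;>
  rcases neg_one_pow_eq_or ℤ (i : ℕ) with h' | h' <;> simp

/-- A top form vanishing on one injective family of basis vectors vanishes. -/
lemma top_form_zero {E : Type*} [AddCommGroup E] [Module ℝ E] {n : ℕ}
    (e : Module.Basis (Fin n) ℝ E) (f : E [⋀^Fin n]→ₗ[ℝ] ℝ) (w : Fin n → Fin n)
    (hw : Function.Injective w) : f (fun i => e (w i)) = 0 ↔ f e = 0 := by
  let σ : Equiv.Perm (Fin n) := Equiv.ofBijective w (Finite.injective_iff_bijective.1 hw)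
  have h : (fun i => e (w i)) = e ∘ σ := rfl
  rw [h, AlternatingMap.map_perm]
  rcases Int.units_eq_one_or (Equiv.Perm.sign σ) with h | h <;> simp [h]

lemma exists_not_range {n m : ℕ} (h : n < m) (k : Fin n → Fin m) : ∃ p, p ∉ Set.range k := by
  by_contra hc
  push Not at hc
  have := Fintype.card_le_of_surjective k hc
  simp at this
  omega

lemma contraction_aux {E : Type*} [AddCommGroup E] [Module ℝ E] {n : ℕ}
    (e : Module.Basis (Fin (n + 2)) ℝ E) (b : E [⋀^Fin (n + 1)]→ₗ[ℝ] ℝ) (c : ℝ)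
    (hb : ∀ i j : Fin (n + 2), ∑ k : Fin n → Fin (n + 2),
        b (Fin.cons (e i) (fun t => e (k t))) * b (Fin.cons (e j) (fun t => e (k t)))
      = c * (if i = j then (1 : ℝ) else 0)) :
    b = 0 ∧ c = 0 := by
  suffices h0 : b = 0 by
    refine ⟨h0, ?_⟩
    have := hb 0 0
    simp [h0] at this
    exact this.symm
  by_contra hne
  set v : Fin (n + 2) → ℝ := fun i => (-1) ^ (i : ℕ) * b (i.removeNth e) with hv
  have hW : ∀ φ : E →ₗ[ℝ] ℝ, wedgeOne φ b e = ∑ i, v i * φ (e i) := by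
    intro φ
    rw [wedgeOne_apply]
    refine Finset.sum_congr rfl fun i _ => ?_
    simp only [hv]; ring
  -- `v` is nonzero
  have hv0 : ∃ j, v j ≠ 0 := by
    by_contra hc
    push Not at hc
    apply hne
    refine e.ext_alternating fun w hw => ?_
    obtain ⟨p, hp⟩ := exists_not_range (by omega) w
    have hinj : Function.Injective (Fin.cons p w : Fin (n + 2) → Fin (n + 2)) :=
      Fin.cons_injective_iff.2 ⟨hp, hw⟩
    have h1 := (top_form_zero e (wedgeOne (e.coord p) b) _ hinj).2 (by rw [hW]; simp [hc])
    rw [wedgeOne_apply, Fin.sum_univ_succ, Finset.sum_eq_zero] at h1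
    · simpa [Fin.removeNth_zero, Fin.tail_def] using h1
    · intro i _
      have : w i ≠ p := fun h => hp ⟨i, h⟩
      simp [Finsupp.single_apply, this]
  -- `v` is in the kernel
  have hker : ∀ k : Fin n → Fin (n + 2),
      ∑ i, v i * b (Fin.cons (e i) (fun t => e (k t))) = 0 := by
    intro k
    let φ : E →ₗ[ℝ] ℝ :=
      { toFun := fun x => b.curryLeft x (fun t => e (k t))
        map_add' := by intro x y; simp
        map_smul' := by intro r x; simp }
    have hφ : ∀ x, φ x = b (Fin.cons x (fun t => e (k t))) := fun x => rfl
    have hφk : ∀ t, φ (e (k t)) = 0 := by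
      intro t
      rw [hφ]
      exact b.map_eq_zero_of_eq (i := 0) (j := t.succ) _ (by simp) (Fin.succ_ne_zero t).symm
    simp only [← hφ]
    rw [← hW]
    by_cases hk : Function.Injective k
    · obtain ⟨p, hp⟩ := exists_not_range (by omega) k
      have hi1 : Function.Injective (Fin.cons p k : Fin (n + 1) → Fin (n + 2)) :=
        Fin.cons_injective_iff.2 ⟨hp, hk⟩
      obtain ⟨q, hq⟩ := exists_not_range (by omega) (Fin.cons p k : Fin (n + 1) → Fin (n + 2))
      have hi2 : Function.Injective
          (Fin.cons q (Fin.cons p k : Fin (n + 1) → Fin (n + 2)) : Fin (n + 2) → Fin (n + 2)) :=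
        Fin.cons_injective_iff.2 ⟨hq, hi1⟩
      rw [← top_form_zero e _ _ hi2, wedgeOne_apply, Fin.sum_univ_succ, Fin.sum_univ_succ,
        Finset.sum_eq_zero]
      · have e0 : (Fin.removeNth 0 fun i => e ((Fin.cons q (Fin.cons p k : Fin (n + 1) → Fin (n + 2)) : Fin (n + 2) → Fin (n + 2)) i))
            = (Fin.cons (e p) (fun t => e (k t)) : Fin (n + 1) → E) := by
          funext i
          refine Fin.cases ?_ (fun i => ?_) i <;> simp [Fin.removeNth]
        have e1 : (Fin.removeNth (Fin.succ 0) fun i => e ((Fin.cons q (Fin.cons p k : Fin (n + 1) → Fin (n + 2)) : Fin (n + 2) → Fin (n + 2)) i))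
            = (Fin.cons (e q) (fun t => e (k t)) : Fin (n + 1) → E) := by
          funext i
          refine Fin.cases ?_ (fun i => ?_) i
          · simp [Fin.removeNth]
          · simp only [Fin.removeNth, Fin.succ_succAbove_succ, Fin.succAbove_zero, Fin.cons_succ]
        rw [e0, e1, ← hφ, ← hφ]
        simp only [Fin.cons_zero, Fin.cons_succ, Fin.val_zero, Fin.val_succ]
        ring
      · intro i _
        simp [hφk]
    · have : φ = 0 := by
        ext x
        rw [hφ]
        simp only [Function.Injective] at hk
        push Not at hk
        obtain ⟨s, t, hst, hne'⟩ := hk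
        exact b.map_eq_zero_of_eq (i := s.succ) (j := t.succ) _ (by simp [hst])
          (fun h => hne' (Fin.succ_injective _ h))
      rw [hW]; simp [this]
  obtain ⟨j, hj⟩ := hv0
  have hc : c = 0 := by
    have h1 : ∑ i, v i * (∑ k : Fin n → Fin (n + 2),
        b (Fin.cons (e i) (fun t => e (k t))) * b (Fin.cons (e j) (fun t => e (k t)))) = 0 := by
      simp only [Finset.mul_sum]
      rw [Finset.sum_comm]
      refine Finset.sum_eq_zero fun k _ => ?_
      simp only [← mul_assoc]
      rw [← Finset.sum_mul, hker, zero_mul]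
    simp only [hb] at h1
    simpa [hj] using h1
  apply hne
  refine e.ext_alternating fun w _ => ?_
  have h2 := hb (w 0) (w 0)
  rw [hc, zero_mul, Finset.sum_eq_zero_iff_of_nonneg (fun _ _ => mul_self_nonneg _)] at h2
  have h3 := mul_self_eq_zero.1 (h2 (Fin.tail w) (Finset.mem_univ _))
  have h4 : (fun i => e (w i)) = Fin.cons (e (w 0)) (fun t => e (Fin.tail w t)) := by
    funext i
    refine Fin.cases ?_ (fun i => ?_) i <;> simp [Fin.tail]
  rw [h4, h3]; rfl

/-- For an alternating `(m-1)`-form `b` on `ℝ^m` (with `m ≥ 2`), if the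
contraction `∑_k b(e_i, e_{k}) b(e_j, e_{k})` over all `(m-2)`-tuples of
standard basis vectors is `c δ_{ij}`, then `b = 0` and `c = 0`. -/
theorem alternating_top_minus_one_contraction_eq_delta
    (m : ℕ) (hm : 2 ≤ m)
    (b : AlternatingMap ℝ (EuclideanSpace ℝ (Fin m)) ℝ (Fin (m - 1))) (c : ℝ)
    (hb : ∀ i j : Fin m,
      ∑ k : Fin (m - 2) → Fin m,
        b (insArgs m (fun l => EuclideanSpace.single l (1 : ℝ)) i k) *
        b (insArgs m (fun l => EuclideanSpace.single l (1 : ℝ)) j k)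
      = c * (if i = j then (1 : ℝ) else 0)) :
    b = 0 ∧ c = 0 := by
  obtain ⟨n, rfl⟩ : ∃ n, m = n + 2 := ⟨m - 2, by omega⟩
  have key : ∀ (i : Fin (n + 2)) (k : Fin n → Fin (n + 2)),
      insArgs (n + 2) (fun l => EuclideanSpace.single l (1 : ℝ)) i k
        = (Fin.cons ((EuclideanSpace.basisFun (Fin (n + 2)) ℝ).toBasis i)
          (fun t => (EuclideanSpace.basisFun (Fin (n + 2)) ℝ).toBasis (k t)) :
          Fin (n + 1) → EuclideanSpace ℝ (Fin (n + 2))) := by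
    intro i k
    funext t
    refine Fin.cases ?_ (fun t => ?_) t
    · simp [insArgs]
    · simp [insArgs]
  refine contraction_aux (EuclideanSpace.basisFun (Fin (n + 2)) ℝ).toBasis b c fun i j => ?_
  rw [← hb i j]
  refine Finset.sum_congr rfl fun k _ => ?_
  rw [← key, ← key]
end

section
/- Let n, p be natural numbers with 4 ≤ n, 2 ≤ p, p ≤ n−2, 2p ≠ n−1 and 2p ≠ n+1, and let 𝓡, L, Λ, κ₀, E2, B2 be real constants. Suppose f : ℝ → ℝ is such that for every r > 0 the function r ↦ r^(n−3) * f(r) is differentiable at r with derivative (𝓡/(n−2)) r^(n−4) + 2 L r^(n−3) − (2Λ/(n−2)) r^(n−2) − κ₀ [ ((p−1)/(n−2)) E2 · r^(2p−n−2) + (1/(p(n−2))) B2 · r^(n−2p−2) ], where the exponents are integers (with n, p cast to ℤ). Then there exists μ ∈ ℝ such that for all r > 0: f(r) = 𝓡/((n−2)(n−3)) + (2L/(n−2)) r − (2Λ/((n−1)(n−2))) r² − μ r^(3−n) + (κ₀/(n−2)) [ ((p−1)/(n+1−2p)) E2 · r^(2p−2n+2) − (1/(p(n−1−2p))) B2 ·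 r^(2−2p) ]. -/
theorem rt_aux (m k : ℤ) (c r : ℝ) (hr : 0 < r) (hk : m = k + 1) (hc : c ≠ 0) (hmc : (m : ℝ) = c) :
    HasDerivAt (fun s : ℝ => s ^ m / c) (r ^ k) r := by
  have h := (hasDerivAt_zpow m r (Or.inl hr.ne')).div_const c
  have e : m - 1 = k := by omega
  rw [e, hmc, mul_div_cancel_left₀ _ hc] at h
  exact h

/-- Radial integration of the Einstein equation for the Robinson–Trautman
metric function `2H` in the generic case `2p ≠ n ± 1`: if `r^(n-3) * f r` has
the prescribed derivative for all `r > 0`, then `f` is given by the paper's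
formula (grr_final) for some mass constant `μ`. -/
theorem RT_metric_function_generic
    (n p : ℕ) (hn : 4 ≤ n) (hp : 2 ≤ p) (hpn : p ≤ n - 2)
    (h1 : 2 * p ≠ n - 1) (h2 : 2 * p ≠ n + 1)
    (𝓡 L Λ κ₀ E2 B2 : ℝ) (f : ℝ → ℝ)
    (hf : ∀ r : ℝ, 0 < r →
      HasDerivAt (fun s : ℝ => s ^ ((n : ℤ) - 3) * f s)
        ((𝓡 / ((n : ℝ) - 2)) * r ^ ((n : ℤ) - 4)
          + 2 * L * r ^ ((n : ℤ) - 3)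
          - (2 * Λ / ((n : ℝ) - 2)) * r ^ ((n : ℤ) - 2)
          - κ₀ * ( (((p : ℝ) - 1) / ((n : ℝ) - 2)) * E2 * r ^ (2 * (p : ℤ) - (n : ℤ) - 2)
            + (1 / ((p : ℝ) * ((n : ℝ) - 2))) * B2 * r ^ ((n : ℤ) - 2 * (p : ℤ) - 2) )) r) :
    ∃ μ : ℝ, ∀ r : ℝ, 0 < r →
      f r = 𝓡 / (((n : ℝ) - 2) * ((n : ℝ) - 3))
        + (2 * L / ((n : ℝ) - 2)) * r
        - (2 * Λ / (((n : ℝ) - 1) * ((n : ℝ) - 2))) * r ^ 2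
        - μ * r ^ (3 - (n : ℤ))
        + (κ₀ / ((n : ℝ) - 2)) *
          ( (((p : ℝ) - 1) / ((n : ℝ) + 1 - 2 * (p : ℝ))) * E2 * r ^ (2 * (p : ℤ) - 2 * (n : ℤ) + 2)
            - (1 / ((p : ℝ) * ((n : ℝ) - 1 - 2 * (p : ℝ)))) * B2 * r ^ (2 - 2 * (p : ℤ)) ) := by
  have hn' : (4 : ℝ) ≤ n := by exact_mod_cast hn
  have hp' : (2 : ℝ) ≤ p := by exact_mod_cast hp
  have c3 : (n : ℝ) - 3 ≠ 0 := by linarith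
  have c2 : (n : ℝ) - 2 ≠ 0 := by linarith
  have c1 : (n : ℝ) - 1 ≠ 0 := by linarith
  have cp : (p : ℝ) ≠ 0 := by linarith
  have cE : (n : ℝ) + 1 - 2 * (p : ℝ) ≠ 0 := by
    intro h
    apply h2
    have : (2 * p : ℝ) = n + 1 := by linarith
    exact_mod_cast this
  have cB : (n : ℝ) - 1 - 2 * (p : ℝ) ≠ 0 := by
    intro h
    have : (2 * p + 1 : ℝ) = n := by linarith
    have h3 : 2 * p + 1 = n := by exact_mod_cast this
    omega
  have cE' : -((n : ℝ) + 1 - 2 * (p : ℝ)) ≠ 0 := neg_ne_zero.mpr cE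
  let G : ℝ → ℝ := fun s =>
    (𝓡 / ((n : ℝ) - 2)) * (s ^ ((n : ℤ) - 3) / ((n : ℝ) - 3))
      + 2 * L * (s ^ ((n : ℤ) - 2) / ((n : ℝ) - 2))
      - (2 * Λ / ((n : ℝ) - 2)) * (s ^ ((n : ℤ) - 1) / ((n : ℝ) - 1))
      - κ₀ * ((((p : ℝ) - 1) / ((n : ℝ) - 2)) * E2 *
            (s ^ (2 * (p : ℤ) - (n : ℤ) - 1) / (-((n : ℝ) + 1 - 2 * (p : ℝ))))
        + (1 / ((p : ℝ) * ((n : ℝ) - 2))) * B2 *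
            (s ^ ((n : ℤ) - 2 * (p : ℤ) - 1) / ((n : ℝ) - 1 - 2 * (p : ℝ))))
  have hd : ∀ r : ℝ, 0 < r →
      HasDerivAt (fun s : ℝ => s ^ ((n : ℤ) - 3) * f s - G s) 0 r := by
    intro r hr
    have hG := ((((rt_aux ((n : ℤ) - 3) ((n : ℤ) - 4) _ r hr (by ring) c3
          (by push_cast; ring)).const_mul (𝓡 / ((n : ℝ) - 2))).add
        ((rt_aux ((n : ℤ) - 2) ((n : ℤ) - 3) _ r hr (by ring) c2
          (by push_cast; ring)).const_mul (2 * L))).sub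
        ((rt_aux ((n : ℤ) - 1) ((n : ℤ) - 2) _ r hr (by ring) c1
          (by push_cast; ring)).const_mul (2 * Λ / ((n : ℝ) - 2)))).sub
        ((((rt_aux (2 * (p : ℤ) - (n : ℤ) - 1) (2 * (p : ℤ) - (n : ℤ) - 2) _ r hr (by ring) cE'
          (by push_cast; ring)).const_mul ((((p : ℝ) - 1) / ((n : ℝ) - 2)) * E2)).add
        ((rt_aux ((n : ℤ) - 2 * (p : ℤ) - 1) ((n : ℤ) - 2 * (p : ℤ) - 2) _ r hr (by ring) cB
          (by push_cast; ring)).const_mul ((1 / ((p : ℝ) * ((n : ℝ) - 2))) * B2))).const_mul κ₀)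
    have h := (hf r hr).sub hG
    rw [sub_self] at h
    exact h
  obtain ⟨a, ha⟩ := isOpen_Ioi.exists_is_const_of_deriv_eq_zero
    (convex_Ioi (0 : ℝ)).isPreconnected
    (fun x hx => (hd x hx).differentiableAt.differentiableWithinAt)
    (fun x hx => (hd x hx).deriv)
  refine ⟨-a, fun r hr => ?_⟩
  have h := ha r hr
  have hr0 : r ≠ 0 := hr.ne'
  have key : ∀ m k : ℤ, m = k + ((n : ℤ) - 3) → r ^ m = r ^ k * r ^ ((n : ℤ) - 3) := by
    intro m k e
    rw [e, zpow_add₀ hr0]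
  have hX : r ^ ((n : ℤ) - 3) ≠ 0 := zpow_ne_zero _ hr0
  have k0 := key 0 (3 - (n : ℤ)) (by ring)
  have k1 := key ((n : ℤ) - 2) 1 (by ring)
  have k2 := key ((n : ℤ) - 1) 2 (by ring)
  have k3 := key (2 * (p : ℤ) - (n : ℤ) - 1) (2 * (p : ℤ) - 2 * (n : ℤ) + 2) (by ring)
  have k4 := key ((n : ℤ) - 2 * (p : ℤ) - 1) (2 - 2 * (p : ℤ)) (by ring)
  rw [zpow_zero] at k0
  rw [zpow_one] at k1
  have k2' : r ^ ((n : ℤ) - 1) = r ^ 2 * r ^ ((n : ℤ) - 3) := by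
    rw [k2]; norm_cast
  simp only [G] at h
  rw [k1, k2', k3, k4] at h
  apply mul_left_cancel₀ hX
  have h' := sub_eq_iff_eq_add.mp h
  rw [h']
  have e : a = a * (r ^ (3 - (n : ℤ)) * r ^ ((n : ℤ) - 3)) := by rw [← k0, mul_one]
  conv_lhs => rw [e]
  generalize r ^ ((n : ℤ) - 3) = X
  generalize r ^ (3 - (n : ℤ)) = Y
  generalize r ^ (2 * (p : ℤ) - 2 * (n : ℤ) + 2) = U
  generalize r ^ (2 - 2 * (p : ℤ)) = V
  rw [div_neg]
  field_simp
  ring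
end

section
/- Let p ≥ 3 be a natural number, set n = 2p − 1 (so n ≥ 5 is odd and 2p = n+1), and let 𝓡, L, Λ, κ₀, E2, B2 be real constants. Suppose f : ℝ → ℝ is such that for every r > 0 the function r ↦ r^(n−3) * f(r) is differentiable at r with derivative (𝓡/(n−2)) r^(n−4) + 2 L r^(n−3) − (2Λ/(n−2)) r^(n−2) − κ₀ [ ((n−1)/(2(n−2))) E2 · r^(−1) + (2/((n+1)(n−2))) B2 · r^(−3) ]. Then there exists μ ∈ ℝ such that for all r > 0: f(r) = 𝓡/((n−2)(n−3)) + (2L/(n−2)) r − (2Λ/((n−1)(n−2))) r² − μ r^(3−n) + (κ₀/(n−2)) [ −((n−1)/2) E2 · (Real.log r) · r^(3−n) + (1/(n+1)) B2 · r^(1−n) ]. -/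
/-- Radial integration of the Einstein equation for the Robinson–Trautman
metric function `2H` in the resonant case `2p = n + 1` (`n = 2p - 1` odd):
the solution contains the logarithmic term of the paper's formula (H_log+). -/
theorem RT_metric_function_log_plus
    (p : ℕ) (hp : 3 ≤ p) (n : ℕ) (hn : n = 2 * p - 1)
    (𝓡 L Λ κ₀ E2 B2 : ℝ) (f : ℝ → ℝ)
    (hf : ∀ r : ℝ, 0 < r →
      HasDerivAt (fun s : ℝ => s ^ ((n : ℤ) - 3) * f s)
        ((𝓡 / ((n : ℝ) - 2)) * r ^ ((n : ℤ) - 4)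
          + 2 * L * r ^ ((n : ℤ) - 3)
          - (2 * Λ / ((n : ℝ) - 2)) * r ^ ((n : ℤ) - 2)
          - κ₀ * ( (((n : ℝ) - 1) / (2 * ((n : ℝ) - 2))) * E2 * r ^ (-1 : ℤ)
            + (2 / (((n : ℝ) + 1) * ((n : ℝ) - 2))) * B2 * r ^ (-3 : ℤ) )) r) :
    ∃ μ : ℝ, ∀ r : ℝ, 0 < r →
      f r = 𝓡 / (((n : ℝ) - 2) * ((n : ℝ) - 3))
        + (2 * L / ((n : ℝ) - 2)) * r
        - (2 * Λ / (((n : ℝ) - 1) * ((n : ℝ) - 2))) * r ^ 2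
        - μ * r ^ (3 - (n : ℤ))
        + (κ₀ / ((n : ℝ) - 2)) *
          ( -(((n : ℝ) - 1) / 2) * E2 * Real.log r * r ^ (3 - (n : ℤ))
            + (1 / ((n : ℝ) + 1)) * B2 * r ^ (1 - (n : ℤ)) ) := by
  obtain ⟨m, rfl⟩ : ∃ m, n = m + 5 := ⟨n - 5, by omega⟩
  clear hn
  have e4 : ((m + 5 : ℕ) : ℤ) - 4 = ((m + 1 : ℕ) : ℤ) := by push_cast; ring
  have e3 : ((m + 5 : ℕ) : ℤ) - 3 = ((m + 2 : ℕ) : ℤ) := by push_cast; ring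
  have e2 : ((m + 5 : ℕ) : ℤ) - 2 = ((m + 3 : ℕ) : ℤ) := by push_cast; ring
  have e3' : 3 - ((m + 5 : ℕ) : ℤ) = -((m + 2 : ℕ) : ℤ) := by push_cast; ring
  have e1' : 1 - ((m + 5 : ℕ) : ℤ) = -((m + 4 : ℕ) : ℤ) := by push_cast; ring
  have r2 : ((m + 5 : ℕ) : ℝ) - 2 = m + 3 := by push_cast; ring
  have r3 : ((m + 5 : ℕ) : ℝ) - 3 = m + 2 := by push_cast; ring
  have r1 : ((m + 5 : ℕ) : ℝ) - 1 = m + 4 := by push_cast; ring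
  have r0 : ((m + 5 : ℕ) : ℝ) + 1 = m + 6 := by push_cast; ring
  have em1 : (-3 : ℤ) = -((3 : ℕ) : ℤ) := by norm_num
  rw [r2, r3, r1, r0, e3', e1']
  rw [r2, r1, r0, e4, e3, e2, em1] at hf
  simp only [zpow_neg, zpow_natCast, zpow_one] at hf ⊢
  have h2 : (m : ℝ) + 2 ≠ 0 := by positivity
  have h3 : (m : ℝ) + 3 ≠ 0 := by positivity
  have h4 : (m : ℝ) + 4 ≠ 0 := by positivity
  have h6 : (m : ℝ) + 6 ≠ 0 := by positivity
  set G : ℝ → ℝ := fun s => 𝓡 / (((m : ℝ) + 3) * (m + 2)) * s ^ (m + 2)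
    + 2 * L / ((m : ℝ) + 3) * s ^ (m + 3)
    - 2 * Λ / (((m : ℝ) + 4) * (m + 3)) * s ^ (m + 4)
    + κ₀ / ((m : ℝ) + 3) * (-(((m : ℝ) + 4) / 2) * E2 * Real.log s
      + 1 / ((m : ℝ) + 6) * B2 * (s ^ 2)⁻¹) with hG
  have hD : ∀ r : ℝ, 0 < r → HasDerivAt (fun s => s ^ (m + 2) * f s - G s) 0 r := by
    intro r hr
    have hr' := hr.ne'
    have hg := ((((hasDerivAt_pow (m + 2) r).const_mul (𝓡 / (((m : ℝ) + 3) * (m + 2)))).add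
      ((hasDerivAt_pow (m + 3) r).const_mul (2 * L / ((m : ℝ) + 3)))).sub
      ((hasDerivAt_pow (m + 4) r).const_mul (2 * Λ / (((m : ℝ) + 4) * (m + 3))))).add
      ((((Real.hasDerivAt_log hr').const_mul (-(((m : ℝ) + 4) / 2) * E2)).add
      (((hasDerivAt_pow 2 r).inv (pow_ne_zero 2 hr')).const_mul
        (1 / ((m : ℝ) + 6) * B2))).const_mul (κ₀ / ((m : ℝ) + 3)))
    refine ((hf r hr).sub hg).congr_deriv ?_
    simp only [show m + 2 - 1 = m + 1 by omega, show m + 3 - 1 = m + 2 by omega,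
      show m + 4 - 1 = m + 3 by omega]
    push_cast
    field_simp
    ring
  obtain ⟨c, hc⟩ := isOpen_Ioi.exists_is_const_of_deriv_eq_zero (isPreconnected_Ioi (a := (0:ℝ)))
    (fun r hr => (hD r hr).differentiableAt.differentiableWithinAt)
    (fun r hr => (hD r hr).deriv)
  refine ⟨-c, fun r hr => ?_⟩
  have h := hc r hr
  have hr' := hr.ne'
  have hp' : r ^ (m + 2) ≠ 0 := pow_ne_zero _ hr'
  have hfr : f r = (G r + c) * (r ^ (m + 2))⁻¹ := by
    rw [← h]; field_simp; ring
  rw [hfr, hG]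
  field_simp
  ring
end

section
/- Let p ≥ 2 be a natural number, set n = 2p + 1 (so n ≥ 5 is odd and 2p = n−1), and let 𝓡, L, Λ, κ₀, E2, B2 be real constants. Suppose f : ℝ → ℝ is such that for every r > 0 the function r ↦ r^(n−3) * f(r) is differentiable at r with derivative (𝓡/(n−2)) r^(n−4) + 2 L r^(n−3) − (2Λ/(n−2)) r^(n−2) − κ₀ [ ((n−3)/(2(n−2))) E2 · r^(−3) + (2/((n−1)(n−2))) B2 · r^(−1) ]. Then there exists μ ∈ ℝ such that for all r > 0: f(r) = 𝓡/((n−2)(n−3)) + (2L/(n−2)) r − (2Λ/((n−1)(n−2))) r² − μ r^(3−n) + (κ₀/(n−2)) [ ((n−3)/4) E2 · r^(1−n) − (2/(n−1)) B2 · (Real.log r) · r^(3−n) ]. -/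
/-- Radial integration of the Einstein equation for the Robinson–Trautman
metric function `2H` in the resonant case `2p = n - 1` (`n = 2p + 1` odd):
the solution contains the logarithmic term of the paper's formula (H_log−). -/
theorem RT_metric_function_log_minus
    (p : ℕ) (hp : 2 ≤ p) (n : ℕ) (hn : n = 2 * p + 1)
    (𝓡 L Λ κ₀ E2 B2 : ℝ) (f : ℝ → ℝ)
    (hf : ∀ r : ℝ, 0 < r →
      HasDerivAt (fun s : ℝ => s ^ ((n : ℤ) - 3) * f s)
        ((𝓡 / ((n : ℝ) - 2)) * r ^ ((n : ℤ) - 4)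
          + 2 * L * r ^ ((n : ℤ) - 3)
          - (2 * Λ / ((n : ℝ) - 2)) * r ^ ((n : ℤ) - 2)
          - κ₀ * ( (((n : ℝ) - 3) / (2 * ((n : ℝ) - 2))) * E2 * r ^ (-3 : ℤ)
            + (2 / (((n : ℝ) - 1) * ((n : ℝ) - 2))) * B2 * r ^ (-1 : ℤ) )) r) :
    ∃ μ : ℝ, ∀ r : ℝ, 0 < r →
      f r = 𝓡 / (((n : ℝ) - 2) * ((n : ℝ) - 3))
        + (2 * L / ((n : ℝ) - 2)) * r
        - (2 * Λ / (((n : ℝ) - 1) * ((n : ℝ) - 2))) * r ^ 2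
        - μ * r ^ (3 - (n : ℤ))
        + (κ₀ / ((n : ℝ) - 2)) *
          ( (((n : ℝ) - 3) / 4) * E2 * r ^ (1 - (n : ℤ))
            - (2 / ((n : ℝ) - 1)) * B2 * Real.log r * r ^ (3 - (n : ℤ)) ) := by
  have hn5 : (5 : ℝ) ≤ (n : ℝ) := by
    have : 5 ≤ n := by omega
    exact_mod_cast this
  have h1 : (n : ℝ) - 1 ≠ 0 := by linarith
  have h2 : (n : ℝ) - 2 ≠ 0 := by linarith
  have h3 : (n : ℝ) - 3 ≠ 0 := by linarith
  clear hn hp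
  let G : ℝ → ℝ := fun s => 𝓡 / (((n : ℝ) - 2) * ((n : ℝ) - 3)) * s ^ ((n : ℤ) - 3)
        + (2 * L / ((n : ℝ) - 2)) * s ^ ((n : ℤ) - 2)
        - (2 * Λ / (((n : ℝ) - 1) * ((n : ℝ) - 2))) * s ^ ((n : ℤ) - 1)
        + (κ₀ / ((n : ℝ) - 2)) *
          ( (((n : ℝ) - 3) / 4) * E2 * s ^ (-2 : ℤ)
            - (2 / ((n : ℝ) - 1)) * B2 * Real.log s)
  have hD : ∀ r : ℝ, 0 < r →
      HasDerivAt (fun s : ℝ => s ^ ((n : ℤ) - 3) * f s - G s) 0 r := by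
    intro r hr
    have z := fun m : ℤ => hasDerivAt_zpow m r (Or.inl hr.ne')
    have hG := ((((z ((n : ℤ) - 3)).const_mul (𝓡 / (((n : ℝ) - 2) * ((n : ℝ) - 3)))).add
      ((z ((n : ℤ) - 2)).const_mul (2 * L / ((n : ℝ) - 2)))).sub
      ((z ((n : ℤ) - 1)).const_mul (2 * Λ / (((n : ℝ) - 1) * ((n : ℝ) - 2))))).add
      ((((z (-2)).const_mul ((((n : ℝ) - 3) / 4) * E2)).sub
        ((Real.hasDerivAt_log hr.ne').const_mul ((2 / ((n : ℝ) - 1)) * B2))).const_mul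
          (κ₀ / ((n : ℝ) - 2)))
    refine ((hf r hr).sub hG).congr_deriv ?_
    rw [show (n : ℤ) - 3 - 1 = n - 4 by ring, show (n : ℤ) - 2 - 1 = n - 3 by ring,
      show (n : ℤ) - 1 - 1 = n - 2 by ring, show (-2 : ℤ) - 1 = -3 by norm_num, zpow_neg_one]
    push_cast
    generalize r ^ ((n : ℤ) - 4) = a
    generalize r ^ ((n : ℤ) - 3) = b
    generalize r ^ ((n : ℤ) - 2) = c
    generalize r ^ (-3 : ℤ) = d
    generalize r⁻¹ = e
    field_simp
    ring
  have hC : ∀ r : ℝ, 0 < r → r ^ ((n : ℤ) - 3) * f r - G r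
      = (1 : ℝ) ^ ((n : ℤ) - 3) * f 1 - G 1 := by
    intro r hr
    exact isOpen_Ioi.is_const_of_deriv_eq_zero (s := Set.Ioi (0 : ℝ)) isPreconnected_Ioi
      (f := fun s : ℝ => s ^ ((n : ℤ) - 3) * f s - G s)
      (fun x hx => (hD x hx).differentiableAt.differentiableWithinAt)
      (fun x hx => (hD x hx).deriv) hr (Set.mem_Ioi.2 one_pos)
  refine ⟨-((1 : ℝ) ^ ((n : ℤ) - 3) * f 1 - G 1), fun r hr => ?_⟩
  have hc := hC r hr
  generalize (1 : ℝ) ^ ((n : ℤ) - 3) * f 1 - G 1 = C at hc ⊢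
  simp only [G] at hc
  have hr0 := hr.ne'
  have e2 : r ^ ((n : ℤ) - 2) = r ^ ((n : ℤ) - 3) * r := by
    rw [← zpow_add_one₀ hr0]; congr 1; ring
  have e1 : r ^ ((n : ℤ) - 1) = r ^ ((n : ℤ) - 3) * r ^ 2 := by
    rw [← zpow_natCast, ← zpow_add₀ hr0]; congr 1; push_cast; ring
  have e3 : r ^ (1 - (n : ℤ)) = r ^ (3 - (n : ℤ)) * r ^ (-2 : ℤ) := by
    rw [← zpow_add₀ hr0]; congr 1; ring
  have e4 : r ^ (3 - (n : ℤ)) * r ^ ((n : ℤ) - 3) = 1 := by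
    rw [← zpow_add₀ hr0]; simp
  rw [e2, e1] at hc
  rw [e3]
  generalize r ^ (3 - (n : ℤ)) = a at *
  generalize r ^ ((n : ℤ) - 3) = b at *
  linear_combination a * hc + (-f r + 𝓡 / (((n : ℝ) - 2) * ((n : ℝ) - 3))
        + (2 * L / ((n : ℝ) - 2)) * r
        - (2 * Λ / (((n : ℝ) - 1) * ((n : ℝ) - 2))) * r ^ 2) * e4
end

section
/- Let m ≥ 1 be a natural number and let H : ℝ → Matrix (Fin m) (Fin m) ℝ be differentiable with d(u) := det (H u) > 0 for all u ∈ ℝ. If for every u the derivative satisfies H'(u) = ( d'(u) / (m * d(u)) ) • H(u), then the map u ↦ (d u) ^ (−1/m : ℝ) • H u (real power Real.rpow of the positive determinant) is constant on ℝ; consequently there exists a matrix Γ with det Γ = 1 such that H u = (d u) ^ (1/m : ℝ) • Γ for all u. -/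
open Matrix

/-- If a differentiable family of matrices `H u` with positive determinant
`d u = det (H u)` satisfies `H' u = (d' u / (m * d u)) • H u`, then
`u ↦ (d u)^(-1/m) • H u` is constant; consequently `H u = (d u)^(1/m) • Γ`
for a fixed matrix `Γ` of unit determinant. -/
theorem conformal_factor_factorization (m : ℕ) (hm : 1 ≤ m)
    (H : ℝ → Matrix (Fin m) (Fin m) ℝ)
    (hdiff : ∀ i j, Differentiable ℝ (fun u => H u i j))
    (hdet : ∀ u : ℝ, 0 < (H u).det)
    (hode : ∀ (u : ℝ) (i j : Fin m), deriv (fun t => H t i j) u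
      = (deriv (fun t => (H t).det) u / ((m : ℝ) * (H u).det)) * H u i j) :
    (∀ u v : ℝ,
        ((H u).det) ^ (-(1 / m) : ℝ) • H u = ((H v).det) ^ (-(1 / m) : ℝ) • H v)
    ∧ ∃ Γ : Matrix (Fin m) (Fin m) ℝ, Γ.det = 1 ∧
        ∀ u : ℝ, H u = ((H u).det) ^ ((1 / m : ℝ)) • Γ := by
  have hm0 : (m : ℝ) ≠ 0 := by
    have : m ≠ 0 := by omega
    exact_mod_cast this
  have hdd : Differentiable ℝ (fun t => (H t).det) := by
    simp only [Matrix.det_apply]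
    refine Differentiable.fun_sum fun σ _ => ?_
    refine Differentiable.const_smul ?_ _
    exact Differentiable.fun_finsetProd fun i _ => hdiff _ _
  have key : ∀ u v : ℝ,
      ((H u).det) ^ (-(1 / m) : ℝ) • H u = ((H v).det) ^ (-(1 / m) : ℝ) • H v := by
    intro u v
    ext i j
    have hD : ∀ t, HasDerivAt
        (fun t => ((H t).det) ^ (-(1 / m) : ℝ) * H t i j) 0 t := by
      intro t
      have h1 := ((hdd t).hasDerivAt.rpow_const (p := (-(1 / m) : ℝ))
        (Or.inl (hdet t).ne')).mul (hdiff i j t).hasDerivAt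
      refine h1.congr_deriv ?_
      rw [hode t i j, Real.rpow_sub_one (hdet t).ne']
      have := (hdet t).ne'
      field_simp
      ring
    have := is_const_of_deriv_eq_zero (fun t => (hD t).differentiableAt)
      (fun t => (hD t).deriv) u v
    simpa using this
  refine ⟨key, ((H 0).det) ^ (-(1 / m) : ℝ) • H 0, ?_, ?_⟩
  · rw [Matrix.det_smul, Fintype.card_fin, ← Real.rpow_natCast, ← Real.rpow_mul (hdet 0).le]
    have : (-(1 / m) : ℝ) * m = -1 := by field_simp
    rw [this, Real.rpow_neg_one, inv_mul_cancel₀ (hdet 0).ne']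
  · intro u
    rw [← key u 0, smul_smul, ← Real.rpow_add (hdet u)]
    simp
end

section
/- Let X be a type, let h : ℝ → X → ℝ satisfy h u x > 0 for all u ∈ ℝ and x ∈ X, and suppose that for each x the function u ↦ h u x is differentiable. Let μ : ℝ → ℝ be differentiable with μ u ≠ 0 for all u, and let c ∈ ℝ with c ≠ 0. If for all u ∈ ℝ and x ∈ X one has deriv μ u = c * μ u * (deriv (fun t => h t x) u) / (h u x), then for all u ∈ ℝ and all x, y ∈ X: h u x * h 0 y = h u y * h 0 x (i.e. h factorizes as h(u,x) = U(u) X(x)). -/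
/-- Separation of variables: if `μ = μ(u)` is nowhere zero and differentiable and
`μ' u = c * μ u * h_{,u}(u,x) / h(u,x)` holds for all `u` and all `x`, with
`h > 0` and `c ≠ 0`, then `h` factorizes as `h(u,x) = U(u) X(x)`, expressed as
`h u x * h 0 y = h u y * h 0 x`. -/
theorem separation_of_variables (X : Type*) (h : ℝ → X → ℝ)
    (hpos : ∀ (u : ℝ) (x : X), 0 < h u x)
    (hdiff : ∀ x : X, Differentiable ℝ (fun u => h u x))
    (μ : ℝ → ℝ) (hμdiff : Differentiable ℝ μ) (hμ0 : ∀ u : ℝ, μ u ≠ 0)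
    (c : ℝ) (hc : c ≠ 0)
    (hode : ∀ (u : ℝ) (x : X),
      deriv μ u = c * μ u * (deriv (fun t => h t x) u) / (h u x)) :
    ∀ (u : ℝ) (x y : X), h u x * h 0 y = h u y * h 0 x := by
  intro u x y
  have key : ∀ t, deriv (fun t => h t x) t * h t y = h t x * deriv (fun t => h t y) t := by
    intro t
    have h1 := hode t x
    rw [hode t y, mul_div_assoc, mul_div_assoc] at h1
    have h2 := mul_left_cancel₀ (mul_ne_zero hc (hμ0 t)) h1
    rw [div_eq_div_iff (hpos t y).ne' (hpos t x).ne'] at h2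
    linarith
  have hd : ∀ t, HasDerivAt (fun t => h t x / h t y) 0 t := by
    intro t
    have h3 := ((hdiff x) t).hasDerivAt.div ((hdiff y) t).hasDerivAt (hpos t y).ne'
    rw [key t, sub_self, zero_div] at h3
    exact h3
  have h4 := is_const_of_deriv_eq_zero (fun t => (hd t).differentiableAt)
    (fun t => (hd t).deriv) u 0
  have h5 : h u x / h u y = h 0 x / h 0 y := h4
  rw [div_eq_div_iff (hpos u y).ne' (hpos 0 y).ne'] at h5
  linarith
end

section
/- Let m ≥ 2 be a natural number, Φ ∈ ℝ with Φ ≠ 0, z : Fin m → ℝ, and T : Fin m → Fin m → Fin m → Fin m → ℝ satisfying the antisymmetry T k i l j = − T i k l j for all indices. Suppose that for all i, j ∈ Fin m: ((m+1)/(m−1)) * Φ * ( z i * z j − ((∑_k (z k)^2)/m) * δ_{ij} ) = − ∑_{k} ∑_{l} z k * z l * T k i l j, where δ_{ij} is the Kronecker delta. Then z = 0. -/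
/-- The contraction argument for multiple WANDs: if `Φ ≠ 0`, `T` is antisymmetric
in its first and second slots (`T k i l j = - T i k l j`), and
`((m+1)/(m-1)) Φ (z_i z_j - (|z|²/m) δ_{ij}) = - ∑_{k,l} z_k z_l T_{kilj}`
for all `i, j`, then `z = 0`. -/
theorem typeD_two_WANDs (m : ℕ) (hm : 2 ≤ m) (Φ : ℝ) (hΦ : Φ ≠ 0)
    (z : Fin m → ℝ) (T : Fin m → Fin m → Fin m → Fin m → ℝ)
    (hT : ∀ i k l j : Fin m, T k i l j = - T i k l j)
    (heq : ∀ i j : Fin m,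
      (((m : ℝ) + 1) / ((m : ℝ) - 1)) * Φ *
          (z i * z j - ((∑ k, (z k) ^ 2) / (m : ℝ)) * (if i = j then (1 : ℝ) else 0))
        = - ∑ k, ∑ l, z k * z l * T k i l j) :
    z = 0 := by
  have hR : ∀ j, ∑ i, z i * ∑ k, ∑ l, z k * z l * T k i l j = 0 := by
    intro j
    have h1 : ∑ i, z i * ∑ k, ∑ l, z k * z l * T k i l j
        = ∑ i, ∑ k, ∑ l, z i * (z k * z l * T k i l j) := by
      simp only [Finset.mul_sum]
    have h2 : ∑ i, ∑ k, ∑ l, z i * (z k * z l * T k i l j)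
        = - ∑ i, ∑ k, ∑ l, z i * (z k * z l * T k i l j) := by
      conv_lhs => rw [Finset.sum_comm]
      simp only [← Finset.sum_neg_distrib]
      refine Finset.sum_congr rfl fun i _ => Finset.sum_congr rfl fun k _ =>
        Finset.sum_congr rfl fun l _ => ?_
      rw [hT k i l j]
      ring
    linarith
  have hm' : (2 : ℝ) ≤ m := by exact_mod_cast hm
  have hm0 : (m : ℝ) ≠ 0 := by linarith
  have hm1 : (m : ℝ) - 1 ≠ 0 := by linarith
  have hm2 : (m : ℝ) + 1 ≠ 0 := by linarith
  funext j
  set S := ∑ k, (z k) ^ 2 with hS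
  have hL : ∑ i, z i * ((((m : ℝ) + 1) / ((m : ℝ) - 1)) * Φ *
      (z i * z j - (S / (m : ℝ)) * (if i = j then (1 : ℝ) else 0))) = 0 := by
    have h3 := hR j
    rw [← neg_eq_zero, ← Finset.sum_neg_distrib] at h3
    refine Eq.trans ?_ h3
    refine Finset.sum_congr rfl fun i _ => ?_
    rw [heq i j]
    ring
  have hE : ∑ i, z i * ((((m : ℝ) + 1) / ((m : ℝ) - 1)) * Φ *
      (z i * z j - (S / (m : ℝ)) * (if i = j then (1 : ℝ) else 0)))
      = (((m : ℝ) + 1) / ((m : ℝ) - 1)) * Φ *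
        (S * z j - S / m * ∑ i, z i * (if i = j then (1 : ℝ) else 0)) := by
    have h5 : S * z j = ∑ i, (z i) ^ 2 * z j := by rw [hS, Finset.sum_mul]
    rw [h5, Finset.mul_sum, ← Finset.sum_sub_distrib, Finset.mul_sum]
    refine Finset.sum_congr rfl fun i _ => ?_
    ring
  have h4 : ∑ i, z i * (if i = j then (1 : ℝ) else 0) = z j := by simp
  rw [hL, h4] at hE
  have h6 : S * z j - S / m * z j = 0 :=
    (mul_eq_zero.mp hE.symm).resolve_left (mul_ne_zero (div_ne_zero hm2 hm1) hΦ)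
  have h7 : ((m : ℝ) - 1) * (S * z j) = 0 := by
    have h9 : ((m : ℝ) - 1) * (S * z j) = m * (S * z j - S / m * z j) := by
      field_simp
    rw [h9, h6, mul_zero]
  have h8 := (mul_eq_zero.mp h7).resolve_left hm1
  rcases mul_eq_zero.mp h8 with h | h
  · have := (Finset.sum_eq_zero_iff_of_nonneg (fun k _ => sq_nonneg (z k))).mp (hS ▸ h) j
      (Finset.mem_univ j)
    simpa using this
  · simpa using h
end
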